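/- For all c > 0, ε > 0 and δ > 0 there exists N such that for all n ≥ N and all families a : Fin n → ℝ of positive reals whose subset sums are 1-separated and whose maximum A = max_i a_i satisfies A² ≤ c · n^{−2/3 − ε} · ∑_{i=1}^{n} a_i², one has ∫_{|x| ≥ 1/(4A)} (sin(2πx)/(2πx))² · ∏_{i=1}^{n} cos(2π a_i x)² dx ≥ (1 − δ) · (√2 − 1)/(2√π) · (∑_{i=1}^{n} a_i²)^{−1/2}. -/

import Mathlib

open Real MeasureTheory Finset

/-- The factor `sin(2πx)/(2πx)`, interpreted as its limit value `1` at `x = 0`. -/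
noncomputable def sinc2pi (x : ℝ) : ℝ :=
  if x = 0 then 1 else Real.sin (2 * π * x) / (2 * π * x)

/-- The subset sums of the family `a` are 1-separated. -/
def SepSums {n : ℕ} (a : Fin n → ℝ) : Prop :=
  ∀ S T : Finset (Fin n), S ≠ T → 1 ≤ |∑ i ∈ S, a i - ∑ i ∈ T, a i|

/-!
Let `φ x = sinc (2πx) ∏ cos (2π a i x)`. It is the Fourier transform of the density `f` of
`∑ i, ±a i + U`, where the signs are independent and symmetric and `U` is uniform on `(-1, 1)`; this
`f` is an average of `2 ^ n` boxes of height `1 / 2`.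

Wherever `f` is nonzero it is at least `2⁻ⁿ / 2`, so `∫ φ² = ∫ f² ≥ 2⁻ⁿ / 2` by Plancherel. If the
subset sums are 1-separated, then the boxes are disjoint, so `f ≤ 2⁻ⁿ / 2` and testing against a
Gaussian gives `∫ φ x * exp (-b x²) ≤ 2⁻ⁿ / 2` for every `b > 0`. Taking `b` to be a small multiple
of `σ² = ∑ i, a i ^ 2` and comparing `φ x` with `exp (-2π²σ²x²)`, a quantitative central limit
theorem, shows that the left side is about `√2 / (2√π σ)`, which therefore bounds `∫ φ²` from below
up to a small error.

The part of `∫ φ²` over `|x| < 1 / (4A)` is at most `∫ exp (-4π²σ²x²) = 1 / (2√π σ)`, because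
`cos² θ ≤ exp (-θ²)` for `|θ| ≤ π / 2`. What remains is about `(√2 - 1) / (2√π σ)`.
-/

section Fourier

open scoped FourierTransform Convolution

variable {V : Type*} [NormedAddCommGroup V] [InnerProductSpace ℝ V] [FiniteDimensional ℝ V]
  [MeasurableSpace V] [BorelSpace V] {f g : V → ℂ} {C : ℝ}

/- Approximating `f` in `L¹` by compactly supported continuous functions makes the convolution a
uniform limit of continuous functions. -/
lemma continuous_convolution_of_bounded (hf : Integrable f) (hg : Integrable g)
    (hgC : ∀ v, ‖g v‖ ≤ C) : Continuous (f ⋆[ContinuousLinearMap.mul ℂ ℂ] g) := by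
  refine continuous_of_uniform_approx_of_continuous fun u hu ↦ ?_
  obtain ⟨η, hη, hηu⟩ := Metric.mem_uniformity_dist.mp hu
  have hC : 0 ≤ C := (norm_nonneg _).trans (hgC 0)
  obtain ⟨ξ, hξ, hξη⟩ := exists_pos_mul_lt hη C
  obtain ⟨φ, hφ_supp, hφ_le, hφ, hφ_int⟩ := hf.exists_hasCompactSupport_integral_sub_le hξ
  refine ⟨φ ⋆[ContinuousLinearMap.mul ℂ ℂ] g,
    hφ_supp.continuous_convolution_left _ hφ hg.locallyIntegrable, fun v ↦ hηu ?_⟩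
  have integrable_mul {h : V → ℂ} (hh : Integrable h) : Integrable fun t ↦ h t * g (v - t) :=
    hh.mul_bdd (hg.comp_sub_left v).aestronglyMeasurable (.of_forall fun t ↦ hgC _)
  simp only [dist_eq_norm, convolution_def, ContinuousLinearMap.mul_apply']
  rw [← integral_sub (integrable_mul hf) (integrable_mul hφ_int)]
  calc ‖∫ t, f t * g (v - t) - φ t * g (v - t)‖
      ≤ ∫ t, C * ‖f t - φ t‖ := by
        refine norm_integral_le_of_norm_le ((hf.sub hφ_int).norm.const_mul C)
          (.of_forall fun t ↦ ?_)
        rw [← sub_mul, norm_mul, mul_comm]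
        gcongr
        exact hgC _
    _ ≤ C * ξ := by rw [integral_const_mul]; gcongr
    _ < η := hξη

lemma integral_fourier_mul_fourier (hf : Integrable f) (hg : Integrable g)
    (hgC : ∀ v, ‖g v‖ ≤ C) (hfg : Integrable fun ξ ↦ 𝓕 f ξ * 𝓕 g ξ) :
    ∫ ξ, 𝓕 f ξ * 𝓕 g ξ = ∫ v, f v * g (-v) := by
  have fourier_conv : 𝓕 (f ⋆[ContinuousLinearMap.mul ℂ ℂ] g) = fun ξ ↦ 𝓕 f ξ * 𝓕 g ξ :=
    funext (Real.fourier_mul_convolution_eq hf hg)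
  have inversion := congrFun ((continuous_convolution_of_bounded hf hg hgC).fourierInv_fourier_eq
    (hf.integrable_convolution _ hg) (fourier_conv ▸ hfg)) 0
  rw [fourier_conv, Real.fourierInv_eq'] at inversion
  simpa [convolution_def] using inversion

lemma fourier_comp_sub_right (f : ℝ → ℂ) (t x : ℝ) :
    𝓕 (fun v ↦ f (v - t)) x = Complex.exp ((-(2 * π * t * x) : ℝ) * Complex.I) * 𝓕 f x := by
  have := congrFun (VectorFourier.fourierIntegral_comp_add_right Real.fourierChar volume
    (innerₗ ℝ) f (-t)) x
  simpa [Real.fourier_eq, VectorFourier.fourierIntegral, Function.comp_def, ← sub_eq_add_neg,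
    Circle.smul_def, Real.fourierChar_apply, mul_assoc, mul_comm t] using this

lemma integral_fourier_mul_gaussian {f : ℝ → ℂ} (hf : Integrable f) {b : ℝ} (hb : 0 < b) :
    ∫ x, 𝓕 f x * (exp (-b * x ^ 2) : ℝ) =
      ∫ v, f v * (√(π / b) * exp (-(π ^ 2 / b) * v ^ 2) : ℝ) := by
  have hb' : 0 < (b : ℂ).re := by simpa using hb
  set G : ℝ → ℂ := fun x ↦ Complex.exp (-b * (‖x‖ : ℂ) ^ 2) with hG
  have G_int : Integrable G := by
    simpa [hG] using GaussianFourier.integrable_cexp_neg_mul_sq_norm_add (V := ℝ) hb' 0 0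
  have G_apply (x : ℝ) : G x = (exp (-b * x ^ 2) : ℝ) := by simp [G, ← Complex.ofReal_pow]
  have fourier_G (v : ℝ) : 𝓕 G v = (√(π / b) * exp (-(π ^ 2 / b) * v ^ 2) : ℝ) := by
    rw [fourier_gaussian_innerProductSpace hb', sqrt_eq_rpow]
    push_cast
    rw [Complex.ofReal_cpow (by positivity)]
    simp only [Module.finrank_self, ← Complex.ofReal_pow, norm_eq_abs, sq_abs]
    push_cast
    congr 2
    ring
  have fourier_flip : ∫ x, 𝓕 f x * G x = ∫ v, f v * 𝓕 G v := by
    simpa using! VectorFourier.integral_fourierIntegral_smul_eq_flip (L := innerₗ ℝ)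
      Real.continuous_fourierChar continuous_inner hf G_int
  simpa only [G_apply, fourier_G] using fourier_flip

end Fourier

lemma sinc_sq_le (x : ℝ) : sinc x ^ 2 ≤ 2 * (1 + x ^ 2)⁻¹ := by
  rw [← div_eq_mul_inv, le_div_iff₀ (by positivity)]
  have sinc_sq_le_one : sinc x ^ 2 ≤ 1 := (sq_le_one_iff_abs_le_one _).2 (abs_sinc_le_one x)
  have sinc_mul_sq_le_one : sinc x ^ 2 * x ^ 2 ≤ 1 := by
    rcases eq_or_ne x 0 with rfl | hx
    · simp
    · rw [sinc_of_ne_zero hx, div_pow, div_mul_cancel₀ _ (by positivity)]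
      exact sin_sq_le_one x
  linarith

lemma integrable_sinc_sq : Integrable fun x ↦ sinc x ^ 2 := by
  refine (integrable_inv_one_add_sq.const_mul 2).mono'
    (continuous_sinc.pow 2).aestronglyMeasurable (.of_forall fun x ↦ ?_)
  rw [norm_of_nonneg (sq_nonneg _)]
  exact sinc_sq_le x

section Density

open scoped FourierTransform

variable {ι : Type*} [Fintype ι] (a : ι → ℝ)

/-- The signed sum `∑ i ∈ S, a i - ∑ i ∉ S, a i`, written so as to avoid the complement. -/
def signedSum (S : Finset ι) : ℝ := 2 * ∑ i ∈ S, a i - ∑ i, a i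

lemma signedSum_compl [DecidableEq ι] (S : Finset ι) : signedSum a Sᶜ = -signedSum a S := by
  have := sum_add_sum_compl S a
  simp only [signedSum]
  linarith

lemma prod_cos_eq (θ : ι → ℝ) :
    ∏ i, Complex.cos (θ i) =
      (1 / 2) ^ Fintype.card ι * ∑ S, Complex.exp (signedSum θ S * Complex.I) := by
  classical
  simp only [Complex.cos, div_eq_mul_one_div (_ + _), prod_mul_distrib, prod_const, card_univ,
    Fintype.prod_add, ← Complex.exp_sum]
  rw [mul_comm]
  congr 1
  refine sum_congr rfl fun S _ ↦ ?_
  rw [← Complex.exp_add, signedSum, ← sum_add_sum_compl S θ]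
  push_cast
  simp only [neg_mul, sum_neg_distrib, ← sum_mul]
  congr 1
  ring

lemma abs_prod_cos_le_one (θ : ι → ℝ) : |∏ i, cos (θ i)| ≤ 1 := by
  rw [abs_prod]
  exact prod_le_one (fun _ _ ↦ abs_nonneg _) fun i _ ↦ abs_cos_le_one _

/-- The density of the uniform distribution on `(-1, 1)`. Openness of the interval makes translates
of its support by points at distance at least `2` disjoint. -/
noncomputable def uniformDensity : ℝ → ℝ := (Set.Ioo (-1) 1).indicator fun _ ↦ 1 / 2

lemma uniformDensity_nonneg (v : ℝ) : 0 ≤ uniformDensity v :=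
  Set.indicator_nonneg (fun _ _ ↦ by norm_num) v

lemma uniformDensity_le (v : ℝ) : uniformDensity v ≤ 1 / 2 :=
  Set.indicator_le_self' (fun _ _ ↦ by norm_num) v

lemma uniformDensity_neg (v : ℝ) : uniformDensity (-v) = uniformDensity v := by
  simp only [uniformDensity, Set.indicator_apply, Set.mem_Ioo, neg_lt_neg_iff, neg_lt (a := v),
    and_comm]

lemma integrable_uniformDensity : Integrable uniformDensity :=
  (integrable_indicator_iff measurableSet_Ioo).2 (integrableOn_const (by simp))

lemma fourier_uniformDensity (x : ℝ) :
    𝓕 (fun v ↦ (uniformDensity v : ℂ)) x = (sinc (2 * π * x) : ℝ) := by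
  have fourier_eq : 𝓕 (fun v ↦ (uniformDensity v : ℂ)) x =
      (∫ v in (-1)..1, Complex.exp ((-(2 * π * x) * v : ℝ) * Complex.I)) / 2 := by
    rw [Real.fourier_real_eq_integral_exp_smul, intervalIntegral.integral_of_le (by norm_num),
      integral_Ioc_eq_integral_Ioo, ← integral_div, ← integral_indicator measurableSet_Ioo]
    congr 1 with v
    by_cases hv : v ∈ Set.Ioo (-1 : ℝ) 1
    · simp [uniformDensity, hv, div_eq_mul_inv, mul_right_comm]
    · simp [uniformDensity, hv]
  rcases eq_or_ne x 0 with rfl | hx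
  · rw [fourier_eq]
    norm_num
  · have hx' : -(2 * π * x) ≠ 0 := by simp [pi_ne_zero, hx]
    rw [fourier_eq, intervalIntegral.integral_comp_mul_left
      (fun t : ℝ ↦ Complex.exp (t * Complex.I)) hx', mul_neg_one, mul_one,
      integral_exp_mul_I_eq_sinc, sinc_neg]
    have : (x : ℂ) ≠ 0 := mod_cast hx
    push_cast [Complex.real_smul]
    field_simp

/-- The density of `∑ i, ±a i + U`, where the signs are independent and symmetric and `U` is
independent of them and uniform on `(-1, 1)`. -/
noncomputable def smoothedDensity (v : ℝ) : ℝ :=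
  (1 / 2) ^ Fintype.card ι * ∑ S, uniformDensity (v - signedSum a S)

/-- The characteristic function of `∑ i, ±a i + U` at `2 * π * x`, where the signs are independent
and symmetric and `U` is independent of them and uniform on `(-1, 1)`. -/
noncomputable def smoothedCharFun (x : ℝ) : ℝ := sinc (2 * π * x) * ∏ i, cos (2 * π * a i * x)

lemma smoothedDensity_nonneg (v : ℝ) : 0 ≤ smoothedDensity a v :=
  mul_nonneg (by positivity) (sum_nonneg fun _ _ ↦ uniformDensity_nonneg _)

lemma smoothedDensity_neg (v : ℝ) : smoothedDensity a (-v) = smoothedDensity a v := by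
  classical
  simp only [smoothedDensity]
  congr 1
  refine Fintype.sum_bijective compl compl_bijective _ _ fun S ↦ ?_
  rw [← uniformDensity_neg, signedSum_compl]
  congr 1
  ring

lemma integrable_smoothedDensity : Integrable (smoothedDensity a) :=
  (integrable_finsetSum _ fun _ _ ↦ integrable_uniformDensity.comp_sub_right _).const_mul _

lemma integrable_ofReal_smoothedDensity : Integrable fun v ↦ (smoothedDensity a v : ℂ) :=
  (integrable_smoothedDensity a).ofReal

lemma smoothedDensity_le_half (v : ℝ) : smoothedDensity a v ≤ 1 / 2 := by
  calc smoothedDensity a v ≤ (1 / 2) ^ Fintype.card ι * ∑ _S : Finset ι, 1 / 2 := by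
        unfold smoothedDensity
        gcongr
        exact uniformDensity_le _
    _ = 1 / 2 := by
        rw [sum_const, card_univ, Fintype.card_finset, nsmul_eq_mul, ← mul_assoc]
        push_cast
        rw [← mul_pow]
        norm_num

lemma fourier_smoothedDensity (x : ℝ) :
    𝓕 (fun v ↦ (smoothedDensity a v : ℂ)) x = smoothedCharFun a x := by
  have integrable_translate (S : Finset ι) :
      Integrable fun v ↦ (uniformDensity (v - signedSum a S) : ℂ) :=
    (integrable_uniformDensity.comp_sub_right _).ofReal
  calc 𝓕 (fun v ↦ (smoothedDensity a v : ℂ)) x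
      = (1 / 2) ^ Fintype.card ι *
          ∑ S, 𝓕 (fun v ↦ (uniformDensity (v - signedSum a S) : ℂ)) x := by
        simp only [Real.fourier_eq]
        rw [← integral_finsetSum _ fun S _ ↦
          (Real.fourierIntegral_convergent_iff x).2 (integrable_translate S), ← integral_const_mul]
        congr 1 with v
        rw [← smul_sum, mul_smul_comm, smoothedDensity]
        push_cast
        rfl
    _ = sinc (2 * π * x) * ((1 / 2) ^ Fintype.card ι *
          ∑ S, Complex.exp (signedSum (fun i ↦ -(2 * π * a i * x)) S * Complex.I)) := by
        simp only [fourier_comp_sub_right (fun v ↦ (uniformDensity v : ℂ)),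
          fourier_uniformDensity, ← sum_mul]
        rw [← mul_assoc, mul_comm]
        congr! 6 with S
        simp only [signedSum, sum_neg_distrib, ← sum_mul, ← mul_sum]
        ring
    _ = smoothedCharFun a x := by
        rw [← prod_cos_eq]
        simp [smoothedCharFun]

lemma abs_smoothedCharFun_le_one (x : ℝ) : |smoothedCharFun a x| ≤ 1 := by
  rw [smoothedCharFun, abs_mul]
  exact mul_le_one₀ (abs_sinc_le_one _) (abs_nonneg _) (abs_prod_cos_le_one _)

lemma continuous_smoothedCharFun : Continuous (smoothedCharFun a) := by
  unfold smoothedCharFun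
  fun_prop

lemma integrable_smoothedCharFun_sq : Integrable fun x ↦ smoothedCharFun a x ^ 2 := by
  simp only [smoothedCharFun, mul_pow]
  refine (integrable_sinc_sq.comp_mul_left' (by positivity)).mul_bdd (c := 1)
    (Continuous.aestronglyMeasurable (by fun_prop)) (.of_forall fun x ↦ ?_)
  rw [norm_pow]
  exact pow_le_one₀ (norm_nonneg _) (abs_prod_cos_le_one _)

lemma integral_smoothedCharFun_sq :
    ∫ x, smoothedCharFun a x ^ 2 = ∫ v, smoothedDensity a v ^ 2 := by
  have norm_le (v : ℝ) : ‖(smoothedDensity a v : ℂ)‖ ≤ 1 / 2 := by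
    rw [Complex.norm_of_nonneg (smoothedDensity_nonneg a v)]
    exact smoothedDensity_le_half a v
  have integrable_ofReal_sq : Integrable fun x ↦ ((smoothedCharFun a x ^ 2 : ℝ) : ℂ) :=
    (integrable_smoothedCharFun_sq a).ofReal
  have plancherel := integral_fourier_mul_fourier (integrable_ofReal_smoothedDensity a)
    (integrable_ofReal_smoothedDensity a) norm_le
    (by simpa only [fourier_smoothedDensity, ← Complex.ofReal_mul, pow_two]
      using integrable_ofReal_sq)
  simpa only [fourier_smoothedDensity, smoothedDensity_neg, ← Complex.ofReal_mul, pow_two,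
    integral_complex_ofReal, Complex.ofReal_inj] using plancherel

lemma integral_smoothedDensity : ∫ v, smoothedDensity a v = 1 := by
  have := fourier_smoothedDensity a 0
  rw [Real.fourier_real_eq_integral_exp_smul] at this
  simp only [mul_zero, Complex.ofReal_zero, zero_mul, Complex.exp_zero, one_smul,
    integral_complex_ofReal, Complex.ofReal_inj] at this
  simpa [smoothedCharFun] using this

lemma mul_smoothedDensity_le_sq (v : ℝ) :
    (1 / 2) ^ Fintype.card ι / 2 * smoothedDensity a v ≤ smoothedDensity a v ^ 2 := by
  rcases (smoothedDensity_nonneg a v).eq_or_lt with h | h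
  · simp [← h]
  rw [sq]
  gcongr
  obtain ⟨S, -, hS⟩ : ∃ S ∈ univ, uniformDensity (v - signedSum a S) ≠ 0 :=
    exists_ne_zero_of_sum_ne_zero (right_ne_zero_of_mul h.ne')
  rw [smoothedDensity, div_eq_mul_one_div]
  gcongr
  calc (1 / 2 : ℝ) = uniformDensity (v - signedSum a S) :=
        (Set.indicator_of_mem (Set.mem_of_indicator_ne_zero hS) fun _ ↦ (1 / 2 : ℝ)).symm
    _ ≤ _ := single_le_sum (f := fun S ↦ uniformDensity (v - signedSum a S))
        (fun _ _ ↦ uniformDensity_nonneg _) (mem_univ S)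

lemma integrable_smoothedDensity_sq : Integrable fun v ↦ smoothedDensity a v ^ 2 := by
  simp only [sq]
  refine (integrable_smoothedDensity a).mul_bdd (c := 1 / 2)
    (integrable_smoothedDensity a).aestronglyMeasurable (.of_forall fun v ↦ ?_)
  rw [norm_of_nonneg (smoothedDensity_nonneg a v)]
  exact smoothedDensity_le_half a v

lemma le_integral_smoothedCharFun_sq :
    (1 / 2) ^ Fintype.card ι / 2 ≤ ∫ x, smoothedCharFun a x ^ 2 := by
  calc (1 / 2) ^ Fintype.card ι / 2
      = ∫ v, (1 / 2) ^ Fintype.card ι / 2 * smoothedDensity a v := by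
        rw [integral_const_mul, integral_smoothedDensity, mul_one]
    _ ≤ ∫ v, smoothedDensity a v ^ 2 :=
        integral_mono ((integrable_smoothedDensity a).const_mul _)
          (integrable_smoothedDensity_sq a) (mul_smoothedDensity_le_sq a)
    _ = ∫ x, smoothedCharFun a x ^ 2 := (integral_smoothedCharFun_sq a).symm

lemma integral_smoothedCharFun_mul_gaussian {b : ℝ} (hb : 0 < b) :
    ∫ x, smoothedCharFun a x * exp (-b * x ^ 2) =
      ∫ v, smoothedDensity a v * (√(π / b) * exp (-(π ^ 2 / b) * v ^ 2)) := by
  have := integral_fourier_mul_gaussian (integrable_ofReal_smoothedDensity a) hb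
  simpa only [fourier_smoothedDensity, ← Complex.ofReal_mul, integral_complex_ofReal,
    Complex.ofReal_inj] using this

variable {a}

lemma smoothedDensity_le
    (hsep : Pairwise fun S T : Finset ι ↦ 1 ≤ |∑ i ∈ S, a i - ∑ i ∈ T, a i|) (v : ℝ) :
    smoothedDensity a v ≤ (1 / 2) ^ Fintype.card ι / 2 := by
  rw [smoothedDensity, div_eq_mul_one_div (_ ^ _)]
  gcongr
  by_cases h : ∃ S, uniformDensity (v - signedSum a S) ≠ 0
  · obtain ⟨S, hS⟩ := h
    rw [Fintype.sum_eq_single S fun T hTS ↦ ?_]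
    · exact uniformDensity_le _
    by_contra hT
    have hS := Set.mem_of_indicator_ne_zero hS
    have hT := Set.mem_of_indicator_ne_zero hT
    simp only [signedSum, Set.mem_Ioo] at hS hT
    have : |∑ i ∈ T, a i - ∑ i ∈ S, a i| < 1 := abs_sub_lt_iff.2 ⟨by linarith, by linarith⟩
    exact this.not_ge (hsep hTS)
  · push Not at h
    simp [h]

lemma integral_smoothedCharFun_mul_gaussian_le
    (hsep : Pairwise fun S T : Finset ι ↦ 1 ≤ |∑ i ∈ S, a i - ∑ i ∈ T, a i|) {b : ℝ} (hb : 0 < b) :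
    ∫ x, smoothedCharFun a x * exp (-b * x ^ 2) ≤ (1 / 2) ^ Fintype.card ι / 2 := by
  have gaussian_int : Integrable fun v ↦ √(π / b) * exp (-(π ^ 2 / b) * v ^ 2) :=
    (integrable_exp_neg_mul_sq (by positivity)).const_mul _
  have integral_gaussian_eq_one : ∫ v, √(π / b) * exp (-(π ^ 2 / b) * v ^ 2) = 1 := by
    rw [integral_const_mul, integral_gaussian, ← sqrt_mul (by positivity), sqrt_eq_one]
    field_simp
  calc ∫ x, smoothedCharFun a x * exp (-b * x ^ 2)
      = ∫ v, smoothedDensity a v * (√(π / b) * exp (-(π ^ 2 / b) * v ^ 2)) :=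
        integral_smoothedCharFun_mul_gaussian a hb
    _ ≤ ∫ v, (1 / 2) ^ Fintype.card ι / 2 * (√(π / b) * exp (-(π ^ 2 / b) * v ^ 2)) := by
        refine integral_mono_of_nonneg
          (.of_forall fun v ↦ mul_nonneg (smoothedDensity_nonneg a v) (by positivity))
          (gaussian_int.const_mul _) (.of_forall fun v ↦ ?_)
        dsimp only
        gcongr
        exact smoothedDensity_le hsep v
    _ = (1 / 2) ^ Fintype.card ι / 2 := by
        rw [integral_const_mul, integral_gaussian_eq_one, mul_one]

end Density

section Pointwise

lemma cos_sq_le_exp_neg_sq {θ : ℝ} (hθ : |θ| ≤ π / 2) : cos θ ^ 2 ≤ exp (-θ ^ 2) := by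
  have antitone : AntitoneOn (fun x ↦ cos x * exp (x ^ 2 / 2)) (Set.Icc 0 (π / 2)) := by
    refine antitoneOn_of_deriv_nonpos (convex_Icc _ _) (by fun_prop) (by fun_prop) fun x hx ↦ ?_
    rw [interior_Icc] at hx
    have hasDeriv : HasDerivAt (fun x ↦ cos x * exp (x ^ 2 / 2))
        ((x * cos x - sin x) * exp (x ^ 2 / 2)) x :=
      ((hasDerivAt_cos x).mul ((hasDerivAt_pow 2 x).div_const 2).exp).congr_deriv
        (by push_cast; ring)
    have cos_pos : 0 < cos x := cos_pos_of_mem_Ioo ⟨by linarith [hx.1, pi_pos], hx.2⟩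
    have mul_cos_lt_sin : x * cos x < sin x := by
      rw [← lt_div_iff₀ cos_pos, ← tan_eq_sin_div_cos]
      exact lt_tan hx.1 hx.2
    rw [hasDeriv.deriv]
    exact mul_nonpos_of_nonpos_of_nonneg (by linarith) (exp_pos _).le
  have cos_mul_exp_le : cos θ * exp (θ ^ 2 / 2) ≤ 1 := by
    simpa using antitone (Set.left_mem_Icc.2 (by positivity)) ⟨abs_nonneg θ, hθ⟩ (abs_nonneg θ)
  have cos_nonneg : 0 ≤ cos θ :=
    cos_nonneg_of_neg_pi_div_two_le_of_le (abs_le.1 hθ).1 (abs_le.1 hθ).2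
  calc cos θ ^ 2 = (cos θ * exp (θ ^ 2 / 2)) ^ 2 * exp (-θ ^ 2) := by
        rw [mul_pow, ← exp_nat_mul, mul_assoc, ← exp_add]
        ring_nf
        simp
    _ ≤ exp (-θ ^ 2) :=
        mul_le_of_le_one_left (exp_pos _).le (pow_le_one₀ (by positivity) cos_mul_exp_le)

lemma abs_sinc_sub_one_le (x : ℝ) : |sinc x - 1| ≤ x ^ 2 / 6 := by
  rcases eq_or_ne x 0 with rfl | hx
  · simp
  calc |sinc x - 1| = |x - sin x| / |x| := by
        rw [abs_sub_comm, sinc_of_ne_zero hx, ← abs_div, sub_div, div_self hx]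
    _ ≤ |x| ^ 3 / 6 / |x| := by gcongr; exact abs_sub_sin_le x
    _ = x ^ 2 / 6 := by
        have := abs_pos.2 hx
        rw [← sq_abs]
        field_simp

lemma abs_cos_sub_exp_le (θ : ℝ) : |cos θ - exp (-(θ ^ 2 / 2))| ≤ 2 * θ ^ 4 := by
  have pow_four_eq : |θ| ^ 4 = θ ^ 4 := Even.pow_abs (by decide) θ
  rcases le_total |θ| 1 with h | h
  · have cos_taylor := pow_four_eq ▸ cos_bound h
    have hθ : θ ^ 2 ≤ 1 := (sq_le_one_iff_abs_le_one θ).2 h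
    have exp_taylor := abs_exp_sub_one_sub_id_le (x := -(θ ^ 2 / 2))
      (by rw [abs_neg, abs_of_nonneg (by positivity)]; linarith)
    rw [abs_le] at *
    constructor <;> nlinarith [pow_nonneg (sq_nonneg θ) 2]
  · have one_le_pow : 1 ≤ θ ^ 4 := pow_four_eq ▸ one_le_pow₀ h
    have exp_le_one : exp (-(θ ^ 2 / 2)) ≤ 1 := exp_le_one_iff.2 (neg_nonpos.2 (by positivity))
    rw [abs_le]
    constructor <;> linarith [cos_le_one θ, neg_one_le_cos θ, exp_pos (-(θ ^ 2 / 2))]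

lemma norm_prod_sub_prod_le {ι R : Type*} [NormedCommRing R] [NormOneClass R] (s : Finset ι)
    {f g : ι → R} (hf : ∀ i ∈ s, ‖f i‖ ≤ 1) (hg : ∀ i ∈ s, ‖g i‖ ≤ 1) :
    ‖∏ i ∈ s, f i - ∏ i ∈ s, g i‖ ≤ ∑ i ∈ s, ‖f i - g i‖ := by
  classical
  induction s using Finset.induction_on with
  | empty => simp
  | insert j s hj ih =>
    rw [forall_mem_insert] at hf hg
    have norm_prod_le_one : ‖∏ i ∈ s, f i‖ ≤ 1 :=
      (Finset.norm_prod_le s f).trans (prod_le_one (fun _ _ ↦ norm_nonneg _) hf.2)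
    rw [prod_insert hj, prod_insert hj, sum_insert hj]
    calc ‖f j * ∏ i ∈ s, f i - g j * ∏ i ∈ s, g i‖
        = ‖(f j - g j) * ∏ i ∈ s, f i + g j * (∏ i ∈ s, f i - ∏ i ∈ s, g i)‖ := by
          congr 1
          ring
      _ ≤ ‖f j - g j‖ * ‖∏ i ∈ s, f i‖ + ‖g j‖ * ‖∏ i ∈ s, f i - ∏ i ∈ s, g i‖ :=
          norm_add_le_of_le (norm_mul_le _ _) (norm_mul_le _ _)
      _ ≤ ‖f j - g j‖ * 1 + 1 * ∑ i ∈ s, ‖f i - g i‖ := by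
          gcongr
          exacts [hg.1, ih hf.2 hg.2]
      _ = ‖f j - g j‖ + ∑ i ∈ s, ‖f i - g i‖ := by ring

variable {ι : Type*} [Fintype ι]

lemma abs_prod_cos_sub_exp_le (θ : ι → ℝ) :
    |∏ i, cos (θ i) - exp (-((∑ i, θ i ^ 2) / 2))| ≤ 2 * ∑ i, θ i ^ 4 := by
  have norm_exp_le_one (i : ι) : ‖exp (-(θ i ^ 2 / 2))‖ ≤ 1 := by
    rw [norm_of_nonneg (exp_pos _).le, exp_le_one_iff, neg_nonpos]
    positivity
  calc |∏ i, cos (θ i) - exp (-((∑ i, θ i ^ 2) / 2))|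
      = ‖∏ i, cos (θ i) - ∏ i, exp (-(θ i ^ 2 / 2))‖ := by
        rw [sum_div, ← sum_neg_distrib, exp_sum, norm_eq_abs]
    _ ≤ ∑ i, ‖cos (θ i) - exp (-(θ i ^ 2 / 2))‖ :=
        norm_prod_sub_prod_le univ (fun i _ ↦ abs_cos_le_one _) fun i _ ↦ norm_exp_le_one i
    _ ≤ 2 * ∑ i, θ i ^ 4 := by
        rw [mul_sum]
        exact sum_le_sum fun i _ ↦ abs_cos_sub_exp_le (θ i)

variable (a : ι → ℝ)

lemma smoothedCharFun_sq_le_exp {x : ℝ} (hx : ∀ i, |a i| * |x| ≤ 1 / 4) :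
    smoothedCharFun a x ^ 2 ≤ exp (-(4 * π ^ 2 * ∑ i, a i ^ 2) * x ^ 2) := by
  have abs_le (i : ι) : |2 * π * a i * x| ≤ π / 2 := by
    rw [abs_mul, abs_mul, abs_of_pos two_pi_pos]
    nlinarith [hx i, pi_pos]
  calc smoothedCharFun a x ^ 2 ≤ 1 * ∏ i, exp (-(2 * π * a i * x) ^ 2) := by
        rw [smoothedCharFun, mul_pow, ← prod_pow]
        gcongr with i
        · exact (sq_le_one_iff_abs_le_one _).2 (abs_sinc_le_one _)
        · exact cos_sq_le_exp_neg_sq (abs_le i)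
    _ = exp (-(4 * π ^ 2 * ∑ i, a i ^ 2) * x ^ 2) := by
        rw [one_mul, ← exp_sum, mul_sum, ← sum_neg_distrib, sum_mul]
        congr! 2 with i
        ring

lemma abs_smoothedCharFun_sub_exp_le (x : ℝ) :
    |smoothedCharFun a x - exp (-(2 * π ^ 2 * ∑ i, a i ^ 2) * x ^ 2)| ≤
      2 * π ^ 2 / 3 * x ^ 2 + 32 * π ^ 4 * (∑ i, a i ^ 4) * x ^ 4 := by
  have prod_cos_sub := abs_prod_cos_sub_exp_le fun i ↦ 2 * π * a i * x
  have sum_sq : (∑ i, (2 * π * a i * x) ^ 2) / 2 = 2 * π ^ 2 * (∑ i, a i ^ 2) * x ^ 2 := by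
    simp only [mul_pow, ← mul_sum, ← sum_mul]
    ring
  have sum_pow_four : ∑ i, (2 * π * a i * x) ^ 4 = 16 * π ^ 4 * (∑ i, a i ^ 4) * x ^ 4 := by
    simp only [mul_pow, ← mul_sum, ← sum_mul]
    ring
  rw [sum_sq, sum_pow_four, ← neg_mul] at prod_cos_sub
  calc |smoothedCharFun a x - exp (-(2 * π ^ 2 * ∑ i, a i ^ 2) * x ^ 2)|
      = |(sinc (2 * π * x) - 1) * ∏ i, cos (2 * π * a i * x) + (∏ i, cos (2 * π * a i * x) -
          exp (-(2 * π ^ 2 * ∑ i, a i ^ 2) * x ^ 2))| := by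
        rw [smoothedCharFun]
        congr 1
        ring
    _ ≤ (2 * π * x) ^ 2 / 6 * 1 + 2 * (16 * π ^ 4 * (∑ i, a i ^ 4) * x ^ 4) := by
        refine (abs_add_le _ _).trans (add_le_add ?_ prod_cos_sub)
        rw [abs_mul]
        gcongr
        exacts [abs_sinc_sub_one_le _, abs_prod_cos_le_one _]
    _ = _ := by ring

end Pointwise

section Integral

variable {ι : Type*} [Fintype ι] {a : ι → ℝ}

lemma integral_central_smoothedCharFun_sq_le {A : ℝ} (haA : ∀ i, |a i| ≤ A)
    (hV : 0 < ∑ i, a i ^ 2) :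
    ∫ x in {x : ℝ | 1 / (4 * A) ≤ |x|}ᶜ, smoothedCharFun a x ^ 2 ≤
      1 / (2 * √π) * (√(∑ i, a i ^ 2))⁻¹ := by
  have gaussian_int := integrable_exp_neg_mul_sq (b := 4 * π ^ 2 * ∑ i, a i ^ 2) (by positivity)
  have measurableSet_central : MeasurableSet {x : ℝ | 1 / (4 * A) ≤ |x|}ᶜ :=
    (measurableSet_le measurable_const measurable_norm).compl
  calc ∫ x in {x : ℝ | 1 / (4 * A) ≤ |x|}ᶜ, smoothedCharFun a x ^ 2
      ≤ ∫ x in {x : ℝ | 1 / (4 * A) ≤ |x|}ᶜ, exp (-(4 * π ^ 2 * ∑ i, a i ^ 2) * x ^ 2) := by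
        refine setIntegral_mono_on (integrable_smoothedCharFun_sq a).integrableOn
          gaussian_int.integrableOn measurableSet_central fun x hx ↦
            smoothedCharFun_sq_le_exp a fun i ↦ ?_
        have hxA : |x| < 1 / (4 * A) := not_le.1 hx
        have hA : 0 < 4 * A := one_div_pos.1 ((abs_nonneg x).trans_lt hxA)
        rw [lt_div_iff₀ hA] at hxA
        nlinarith [mul_le_mul_of_nonneg_right (haA i) (abs_nonneg x)]
    _ ≤ ∫ x, exp (-(4 * π ^ 2 * ∑ i, a i ^ 2) * x ^ 2) :=
        setIntegral_le_integral gaussian_int (.of_forall fun x ↦ (exp_pos _).le)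
    _ = 1 / (2 * √π) * (√(∑ i, a i ^ 2))⁻¹ := by
        rw [integral_gaussian, sqrt_eq_iff_mul_self_eq (by positivity) (by positivity)]
        field_simp
        rw [sq_sqrt pi_pos.le, sq_sqrt hV.le]
        ring

lemma abs_smoothedCharFun_sub_exp_mul_exp_le {b : ℝ} (hb : 0 < b) (x : ℝ) :
    |smoothedCharFun a x - exp (-(2 * π ^ 2 * ∑ i, a i ^ 2) * x ^ 2)| * exp (-b * x ^ 2) ≤
      (4 * π ^ 2 / (3 * b) + 256 * π ^ 4 * (∑ i, a i ^ 4) / b ^ 2) * exp (-(b / 2) * x ^ 2) := by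
  -- Half of the Gaussian weight absorbs the polynomial error.
  set t := b / 2 * x ^ 2 with ht
  have ht0 : 0 ≤ t := by positivity
  have t_le_exp : t ≤ exp t := by simpa using pow_div_factorial_le_exp t ht0 1
  have t_sq_le_exp : t ^ 2 / 2 ≤ exp t := pow_div_factorial_le_exp t ht0 2
  have x_sq : x ^ 2 = 2 / b * t := by rw [ht]; field_simp
  have x_pow_four : x ^ 4 = 8 / b ^ 2 * (t ^ 2 / 2) := by rw [ht]; field_simp; norm_num
  calc |smoothedCharFun a x - exp (-(2 * π ^ 2 * ∑ i, a i ^ 2) * x ^ 2)| * exp (-b * x ^ 2)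
      ≤ (2 * π ^ 2 / 3 * x ^ 2 + 32 * π ^ 4 * (∑ i, a i ^ 4) * x ^ 4) * exp (-b * x ^ 2) := by
        gcongr
        exact abs_smoothedCharFun_sub_exp_le a x
    _ ≤ (2 * π ^ 2 / 3 * (2 / b * exp t) + 32 * π ^ 4 * (∑ i, a i ^ 4) * (8 / b ^ 2 * exp t)) *
          exp (-b * x ^ 2) := by
        have : 0 ≤ ∑ i, a i ^ 4 := sum_nonneg fun _ _ ↦ by positivity
        rw [x_pow_four, x_sq]
        gcongr
    _ = (4 * π ^ 2 / (3 * b) + 256 * π ^ 4 * (∑ i, a i ^ 4) / b ^ 2) *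
          exp (-(b / 2) * x ^ 2) := by
        have : exp (-(b / 2) * x ^ 2) = exp t * exp (-b * x ^ 2) := by
          rw [← exp_add, ht]
          ring_nf
        rw [this]
        field_simp
        ring

lemma sub_le_integral_smoothedCharFun_mul_gaussian (a : ι → ℝ) {b : ℝ} (hb : 0 < b) :
    √(π / (2 * π ^ 2 * ∑ i, a i ^ 2 + b)) -
        (4 * π ^ 2 / (3 * b) + 256 * π ^ 4 * (∑ i, a i ^ 4) / b ^ 2) * √(π / (b / 2)) ≤
      ∫ x, smoothedCharFun a x * exp (-b * x ^ 2) := by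
  have : 0 ≤ ∑ i, a i ^ 2 := sum_nonneg fun _ _ ↦ sq_nonneg _
  have hb_int := integrable_exp_neg_mul_sq hb
  have gaussian_int :=
    integrable_exp_neg_mul_sq (b := 2 * π ^ 2 * ∑ i, a i ^ 2 + b) (by positivity)
  have half_int := integrable_exp_neg_mul_sq (half_pos hb)
  rw [← integral_gaussian, ← integral_gaussian, ← integral_const_mul,
    ← integral_sub gaussian_int (half_int.const_mul _)]
  refine integral_mono (gaussian_int.sub (half_int.const_mul _)) ?_ fun x ↦ ?_
  · exact hb_int.bdd_mul (c := 1) (continuous_smoothedCharFun a).aestronglyMeasurable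
      (.of_forall fun x ↦ abs_smoothedCharFun_le_one a x)
  · have exp_split : exp (-(2 * π ^ 2 * ∑ i, a i ^ 2 + b) * x ^ 2) =
        exp (-(2 * π ^ 2 * ∑ i, a i ^ 2) * x ^ 2) * exp (-b * x ^ 2) := by
      rw [← exp_add]
      ring_nf
    dsimp only
    rw [exp_split, sub_le_comm, ← sub_mul]
    refine le_trans ?_ (abs_smoothedCharFun_sub_exp_mul_exp_le hb x)
    gcongr
    rw [abs_sub_comm]
    exact le_abs_self _

lemma sub_mul_le_sqrt_mul_integral_smoothedCharFun_mul_gaussian {β r : ℝ} (hβ : 0 < β)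
    (hV : 0 < ∑ i, a i ^ 2) (hr : 1 ≤ r * ∑ i, a i ^ 2)
    (ha : ∑ i, a i ^ 4 ≤ r * (∑ i, a i ^ 2) ^ 2) :
    √(π / (2 * π ^ 2 + β)) -
        r * ((4 * π ^ 2 / (3 * β) + 256 * π ^ 4 / β ^ 2) * √(π / (β / 2))) ≤
      √(∑ i, a i ^ 2) * ∫ x, smoothedCharFun a x * exp (-(β * ∑ i, a i ^ 2) * x ^ 2) := by
  have clt := sub_le_integral_smoothedCharFun_mul_gaussian a (mul_pos hβ hV)
  set V := ∑ i, a i ^ 2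
  have sqrt_mul_sqrt_div (s : ℝ) : √V * √(π / (s * V)) = √(π / s) := by
    rw [← sqrt_mul hV.le]
    congr 1
    field_simp
  have error_le : 4 * π ^ 2 / (3 * (β * V)) + 256 * π ^ 4 * (∑ i, a i ^ 4) / (β * V) ^ 2 ≤
      r * (4 * π ^ 2 / (3 * β) + 256 * π ^ 4 / β ^ 2) := by
    calc 4 * π ^ 2 / (3 * (β * V)) + 256 * π ^ 4 * (∑ i, a i ^ 4) / (β * V) ^ 2
        = 4 * π ^ 2 / (3 * β) * (1 / V) + 256 * π ^ 4 / β ^ 2 * ((∑ i, a i ^ 4) / V ^ 2) := by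
          field_simp
      _ ≤ 4 * π ^ 2 / (3 * β) * r + 256 * π ^ 4 / β ^ 2 * r := by
          gcongr
          · rwa [div_le_iff₀ hV]
          · rwa [div_le_iff₀ (by positivity)]
      _ = r * (4 * π ^ 2 / (3 * β) + 256 * π ^ 4 / β ^ 2) := by ring
  calc √(π / (2 * π ^ 2 + β)) -
        r * ((4 * π ^ 2 / (3 * β) + 256 * π ^ 4 / β ^ 2) * √(π / (β / 2)))
      ≤ √(π / (2 * π ^ 2 + β)) - (4 * π ^ 2 / (3 * (β * V)) +
          256 * π ^ 4 * (∑ i, a i ^ 4) / (β * V) ^ 2) * √(π / (β / 2)) := by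
        rw [← mul_assoc]
        gcongr
    _ = √V * (√(π / (2 * π ^ 2 * V + β * V)) - (4 * π ^ 2 / (3 * (β * V)) +
          256 * π ^ 4 * (∑ i, a i ^ 4) / (β * V) ^ 2) * √(π / (β * V / 2))) := by
        rw [← add_mul, mul_sub, mul_left_comm (√V), mul_div_right_comm β V 2,
          sqrt_mul_sqrt_div, sqrt_mul_sqrt_div]
    _ ≤ √V * ∫ x, smoothedCharFun a x * exp (-(β * V) * x ^ 2) := by gcongr

lemma integral_smoothedCharFun_mul_gaussian_sub_le_integral_tail
    (hsep : Pairwise fun S T : Finset ι ↦ 1 ≤ |∑ i ∈ S, a i - ∑ i ∈ T, a i|)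
    {A : ℝ} (haA : ∀ i, |a i| ≤ A) (hV : 0 < ∑ i, a i ^ 2) {b : ℝ} (hb : 0 < b) :
    (∫ x, smoothedCharFun a x * exp (-b * x ^ 2)) - 1 / (2 * √π) * (√(∑ i, a i ^ 2))⁻¹ ≤
      ∫ x in {x : ℝ | 1 / (4 * A) ≤ |x|}, smoothedCharFun a x ^ 2 := by
  have measurableSet_tail : MeasurableSet {x : ℝ | 1 / (4 * A) ≤ |x|} :=
    measurableSet_le measurable_const measurable_norm
  linarith [integral_add_compl measurableSet_tail (integrable_smoothedCharFun_sq a),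
    integral_central_smoothedCharFun_sq_le haA hV, le_integral_smoothedCharFun_sq a,
    integral_smoothedCharFun_mul_gaussian_le hsep hb]

end Integral

lemma exists_sub_le_sqrt_pi_div_sub_mul {κ : ℝ} (hκ : 0 < κ) (K : ℝ → ℝ) :
    ∃ β > 0, ∃ r > 0, √2 / (2 * √π) - κ ≤ √(π / (2 * π ^ 2 + β)) - r * K β := by
  have value_zero : √(π / (2 * π ^ 2 + 0)) = √2 / (2 * √π) := by
    rw [sqrt_eq_iff_mul_self_eq (by positivity) (by positivity)]
    field_simp
    rw [sq_sqrt pi_pos.le, sq_sqrt zero_le_two]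
    ring
  have continuousAt_zero : ContinuousAt (fun β ↦ √(π / (2 * π ^ 2 + β))) 0 :=
    (ContinuousAt.div (by fun_prop) (by fun_prop) (by positivity)).sqrt
  have eventually_lt : ∀ᶠ β in nhdsWithin 0 (Set.Ioi 0),
      √2 / (2 * √π) - κ / 2 < √(π / (2 * π ^ 2 + β)) :=
    (continuousAt_zero.eventually_const_lt (by simp only [value_zero]; linarith)).filter_mono
      nhdsWithin_le_nhds
  obtain ⟨β, hβ_lt, hβ⟩ := (eventually_lt.and self_mem_nhdsWithin).exists
  obtain ⟨r, hr, hrK⟩ := exists_pos_mul_lt (half_pos hκ) (K β)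
  exact ⟨β, hβ, r, hr, by linarith⟩

lemma sum_pow_four_le {ι : Type*} [Fintype ι] {a : ι → ℝ} {A : ℝ} (haA : ∀ i, |a i| ≤ A) :
    ∑ i, a i ^ 4 ≤ A ^ 2 * ∑ i, a i ^ 2 := by
  rw [mul_sum]
  refine sum_le_sum fun i _ ↦ ?_
  calc a i ^ 4 = |a i| ^ 2 * a i ^ 2 := by rw [sq_abs]; ring
    _ ≤ A ^ 2 * a i ^ 2 := by gcongr; exact haA i

lemma eventually_mul_rpow_neg_le (c : ℝ) {y r : ℝ} (hy : 0 < y) (hr : 0 < r) :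
    ∀ᶠ n : ℕ in Filter.atTop, c * (n : ℝ) ^ (-y) ≤ r := by
  have tendsto_zero :=
    ((tendsto_rpow_neg_atTop hy).comp tendsto_natCast_atTop_atTop).const_mul c
  rw [mul_zero] at tendsto_zero
  exact tendsto_zero.eventually_le_const hr

lemma sinc2pi_eq_sinc (x : ℝ) : sinc2pi x = sinc (2 * π * x) := by
  simp [sinc2pi, sinc_apply, pi_ne_zero]

lemma smoothedCharFun_sq_eq {ι : Type*} [Fintype ι] (a : ι → ℝ) (x : ℝ) :
    smoothedCharFun a x ^ 2 = sinc2pi x ^ 2 * ∏ i, cos (2 * π * a i * x) ^ 2 := by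
  rw [smoothedCharFun, mul_pow, prod_pow, sinc2pi_eq_sinc]

theorem stmt_4_general (δ : ℝ) (hδ : 0 < δ) :
    ∃ r > 0, ∀ (n : ℕ) (a : Fin n → ℝ), SepSums a →
      ∀ A : ℝ, IsGreatest (Set.range fun i ↦ |a i|) A → A ^ 2 ≤ r * ∑ i, a i ^ 2 →
      (1 - δ) * (√2 - 1) / (2 * √π) * (∑ i, a i ^ 2) ^ (-(1/2) : ℝ) ≤
        ∫ x in {x : ℝ | 1 / (4 * A) ≤ |x|},
          sinc2pi x ^ 2 * ∏ i, cos (2 * π * a i * x) ^ 2 := by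
  have hκ : 0 < δ * ((√2 - 1) / (2 * √π)) := by
    have := sub_pos.2 one_lt_sqrt_two
    positivity
  obtain ⟨β, hβ, r, hr, hβr⟩ := exists_sub_le_sqrt_pi_div_sub_mul hκ
    fun β ↦ (4 * π ^ 2 / (3 * β) + 256 * π ^ 4 / β ^ 2) * √(π / (β / 2))
  refine ⟨r, hr, fun n a hsep A ⟨⟨i₀, hi₀⟩, hA⟩ hAr ↦ ?_⟩
  have haA (i : Fin n) : |a i| ≤ A := hA ⟨i, rfl⟩
  have one_le_A : 1 ≤ A := by simpa [← hi₀] using hsep {i₀} ∅ (singleton_ne_empty i₀)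
  have hrV : 1 ≤ r * ∑ i, a i ^ 2 := (one_le_pow₀ one_le_A).trans hAr
  have hV : 0 < ∑ i, a i ^ 2 := pos_of_mul_pos_right (one_pos.trans_le hrV) hr.le
  have fourth_moment_le : ∑ i, a i ^ 4 ≤ r * (∑ i, a i ^ 2) ^ 2 := by
    rw [sq (∑ i, _), ← mul_assoc]
    exact (sum_pow_four_le haA).trans (by gcongr)
  have clt := hβr.trans
    (sub_mul_le_sqrt_mul_integral_smoothedCharFun_mul_gaussian hβ hV hrV fourth_moment_le)
  have tail := integral_smoothedCharFun_mul_gaussian_sub_le_integral_tail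
    (fun S T h ↦ hsep S T h) haA hV (mul_pos hβ hV)
  rw [← inv_mul_le_iff₀ (sqrt_pos.2 hV)] at clt
  simp only [← smoothedCharFun_sq_eq]
  calc (1 - δ) * (√2 - 1) / (2 * √π) * (∑ i, a i ^ 2) ^ (-(1/2) : ℝ)
      = (√(∑ i, a i ^ 2))⁻¹ * (√2 / (2 * √π) - δ * ((√2 - 1) / (2 * √π))) -
          1 / (2 * √π) * (√(∑ i, a i ^ 2))⁻¹ := by
        rw [rpow_neg hV.le, ← sqrt_eq_rpow]
        ring
    _ ≤ _ := by linarith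

theorem stmt_4 (c ε δ : ℝ) (hc : 0 < c) (hε : 0 < ε) (hδ : 0 < δ) :
    ∃ N : ℕ, ∀ n : ℕ, N ≤ n → ∀ a : Fin n → ℝ, (∀ i, 0 < a i) →
      SepSums a → ∀ A : ℝ, IsGreatest (Set.range a) A →
      A ^ 2 ≤ c * (n : ℝ) ^ (-(2/3 : ℝ) - ε) * ∑ i, (a i) ^ 2 →
      (1 - δ) * (Real.sqrt 2 - 1) / (2 * Real.sqrt π) *
          (∑ i, (a i) ^ 2) ^ (-(1/2) : ℝ) ≤
        ∫ x in {x : ℝ | 1 / (4 * A) ≤ |x|},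
          (sinc2pi x) ^ 2 * ∏ i, (Real.cos (2 * π * a i * x)) ^ 2 := by
  obtain ⟨r, hr, bound⟩ := stmt_4_general δ hδ
  obtain ⟨N, hN⟩ := Filter.eventually_atTop.1
    (eventually_mul_rpow_neg_le c (y := 2 / 3 + ε) (by positivity) hr)
  refine ⟨N, fun n hn a ha hsep A hA hAn ↦ bound n a hsep A ?_ (hAn.trans ?_)⟩
  · simpa only [abs_of_pos (ha _)] using hA
  · gcongr
    simpa only [neg_add'] using hN n hn
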